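/- arXiv:1702.01139 — 3 statements merged into one kernel-verified Lean document; each statement's English description precedes it below -/
import Mathlib

section
/- Suppose ω is an alternating bilinear form on V₂ that is multiplicative. Then for all a, a' ∈ W₂ one has C₁₁(a,a') = −C₃₂(∂₂ a, ∂₂ a'); explicitly, ω((a,0,0,0),(a',0,0,0)) = −ω((0,0,∂₂ a,0),(0,∂₂ a',0,0)). -/
/-!
Each of the faces `f₀`, `f₁`, `f₂` sees only one of the three `W₂`-slots of `V₃`, so for vectors
`u`, `v` supported in different `W₂`-slots multiplicativity reduces to `ω (f₃ u, f₃ v) = 0`. Write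
`p = (a, 0, 0, 0)`, `q = (0, 0, ∂₂ a, 0)`, `p' = (a', 0, 0, 0)`, `r' = (0, ∂₂ a', 0, 0)`. The
map `f₃` sends the slots to vectors of the form `p' + r'`, `-p + q` and `p`, hence
`ω (p, p' + r') = ω (-p + q, p') = ω (-p + q, p' + r') = 0`. The first equation gives
`ω (p, p') = -ω (p, r')`, the difference of the other two gives `ω (p, r') = ω (q, r')`.
-/

section Multiplicative

variable {R X V N : Type*} [CommRing R] [AddCommGroup V] [Module R V] [AddCommGroup N] [Module R N]

/-- A bilinear map `ω` on `V` is multiplicative for the faces `f i : X → V` if its simplicial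
coboundary, the alternating sum of its pullbacks along the faces, vanishes. -/
def IsMultiplicativeForm {n : ℕ} (f : Fin n → X → V) (ω : V →ₗ[R] V →ₗ[R] N) : Prop :=
  ∀ u v, ∑ i : Fin n, (-1 : ℤˣ) ^ (i : ℕ) • ω (f i u) (f i v) = 0

theorem IsMultiplicativeForm.apply_face_eq_zero {n : ℕ} {f : Fin n → X → V}
    {ω : V →ₗ[R] V →ₗ[R] N} (hω : IsMultiplicativeForm f ω) (j : Fin n) {u v : X}
    (huv : ∀ i ≠ j, f i u = 0 ∨ f i v = 0) : ω (f j u) (f j v) = 0 := by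
  have other_faces_vanish : ∀ i ≠ j, (-1 : ℤˣ) ^ (i : ℕ) • ω (f i u) (f i v) = 0 := by
    intro i hij
    rcases huv i hij with h | h <;> simp [h]
  have hsum := hω u v
  rwa [Fintype.sum_eq_single j other_faces_vanish, smul_eq_zero_iff_eq] at hsum

end Multiplicative

section ChainComplex

variable {R W₀ W₁ W₂ N : Type*} [CommRing R] [AddCommGroup W₀] [Module R W₀]
  [AddCommGroup W₁] [Module R W₁] [AddCommGroup W₂] [Module R W₂] [AddCommGroup N] [Module R N]

/-- The face maps `f₀, f₁, f₂, f₃ : V₃ → V₂` of the simplicial module attached to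
`∂₂ : W₂ → W₁` and `∂₁ : W₁ → W₀`, as plain functions indexed by `Fin 4`. -/
def chainFace (d₂ : W₂ →ₗ[R] W₁) (d₁ : W₁ →ₗ[R] W₀) :
    Fin 4 → W₂ × W₂ × W₂ × W₁ × W₁ × W₁ × W₀ → W₂ × W₁ × W₁ × W₀
  | 0, (a, _, _, x, y, _, m) => (a, x, y, m)
  | 1, (_, b, _, x, _, z, m) => (b, x, z, m)
  | 2, (_, _, c, _, y, z, m) => (c, y, z, m)
  | 3, (a, b, c, x, y, z, m) => (c - b + a, d₂ a + y - x, d₂ b + z - x, m - d₁ x)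

variable {d₂ : W₂ →ₗ[R] W₁} {d₁ : W₁ →ₗ[R] W₀}
  {ω : (W₂ × W₁ × W₁ × W₀) →ₗ[R] (W₂ × W₁ × W₁ × W₀) →ₗ[R] N}

theorem isMultiplicativeForm_chainFace_iff :
    IsMultiplicativeForm (chainFace d₂ d₁) ω ↔
      ∀ (a b c : W₂) (x y z : W₁) (m : W₀) (a' b' c' : W₂) (x' y' z' : W₁) (m' : W₀),
        ω (a, x, y, m) (a', x', y', m')
        - ω (b, x, z, m) (b', x', z', m')
        + ω (c, y, z, m) (c', y', z', m')
        - ω (c - b + a, d₂ a + y - x, d₂ b + z - x, m - d₁ x)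
            (c' - b' + a', d₂ a' + y' - x', d₂ b' + z' - x', m' - d₁ x') = 0 := by
  have neg_one_cubed : (-1 : ℤˣ) ^ 3 = -1 := by decide
  simp [IsMultiplicativeForm, Fin.sum_univ_four, Prod.forall, chainFace, neg_one_cubed,
    Units.neg_smul, sub_eq_add_neg]

theorem IsMultiplicativeForm.component₁₁_eq_neg_component₁₂
    (hω : IsMultiplicativeForm (chainFace d₂ d₁) ω) (a a' : W₂) :
    ω (a, 0, 0, 0) (a', 0, 0, 0) = -ω (a, 0, 0, 0) (0, d₂ a', 0, 0) := by
  have orthogonal_ca : ω (a, 0, 0, 0) (a', d₂ a', 0, 0) = 0 := by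
    simpa [chainFace] using hω.apply_face_eq_zero 3
      (u := (0, 0, a, 0, 0, 0, 0)) (v := (a', 0, 0, 0, 0, 0, 0))
      (by intro i hi; fin_cases i <;> simp_all [chainFace])
  rw [eq_neg_iff_add_eq_zero, ← map_add]
  simpa only [Prod.mk_add_mk, add_zero, zero_add] using orthogonal_ca

theorem IsMultiplicativeForm.component₁₂_eq_component₃₂
    (hω : IsMultiplicativeForm (chainFace d₂ d₁) ω) (a a' : W₂) :
    ω (a, 0, 0, 0) (0, d₂ a', 0, 0) = ω (0, 0, d₂ a, 0) (0, d₂ a', 0, 0) := by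
  have orthogonal_bc : ω (-a, 0, d₂ a, 0) (a', 0, 0, 0) = 0 := by
    simpa [chainFace] using hω.apply_face_eq_zero 3
      (u := (0, a, 0, 0, 0, 0, 0)) (v := (0, 0, a', 0, 0, 0, 0))
      (by intro i hi; fin_cases i <;> simp_all [chainFace])
  have orthogonal_ba : ω (-a, 0, d₂ a, 0) (a', d₂ a', 0, 0) = 0 := by
    simpa [chainFace] using hω.apply_face_eq_zero 3
      (u := (0, a, 0, 0, 0, 0, 0)) (v := (a', 0, 0, 0, 0, 0, 0))
      (by intro i hi; fin_cases i <;> simp_all [chainFace])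
  have orthogonal_boundary : ω (-a, 0, d₂ a, 0) (0, d₂ a', 0, 0) = 0 := calc
    _ = ω (-a, 0, d₂ a, 0) (a', 0, 0, 0) + ω (-a, 0, d₂ a, 0) (0, d₂ a', 0, 0) := by
      rw [orthogonal_bc, zero_add]
    _ = ω (-a, 0, d₂ a, 0) (a', d₂ a', 0, 0) := by
      simp only [← map_add, Prod.mk_add_mk, add_zero, zero_add]
    _ = 0 := orthogonal_ba
  rw [eq_comm, ← sub_eq_zero, ← LinearMap.sub_apply, ← map_sub]
  simpa only [Prod.mk_sub_mk, zero_sub, sub_zero, neg_zero] using orthogonal_boundary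

theorem stmt_2_general (hω : IsMultiplicativeForm (chainFace d₂ d₁) ω) (a a' : W₂) :
    ω (a, 0, 0, 0) (a', 0, 0, 0) = -ω (0, 0, d₂ a, 0) (0, d₂ a', 0, 0) := by
  rw [hω.component₁₁_eq_neg_component₁₂, hω.component₁₂_eq_component₃₂]

end ChainComplex

/-- For a multiplicative alternating bilinear form `ω` on
`V₂ = W₂ × W₁ × W₁ × W₀`, one has `C₁₁(a,a') = -C₃₂(∂₂ a, ∂₂ a')`. -/
theorem stmt_2
    (W0 W1 W2 : Type*)
    [AddCommGroup W0] [Module ℝ W0]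
    [AddCommGroup W1] [Module ℝ W1]
    [AddCommGroup W2] [Module ℝ W2]
    (d2 : W2 →ₗ[ℝ] W1) (d1 : W1 →ₗ[ℝ] W0)
    (hd : ∀ a : W2, d1 (d2 a) = 0)
    (ω : (W2 × W1 × W1 × W0) →ₗ[ℝ] (W2 × W1 × W1 × W0) →ₗ[ℝ] ℝ)
    (halt : ∀ v, ω v v = 0)
    (hmult : ∀ (a b c : W2) (x y z : W1) (m : W0)
        (a' b' c' : W2) (x' y' z' : W1) (m' : W0),
      ω (a, x, y, m) (a', x', y', m')
      - ω (b, x, z, m) (b', x', z', m')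
      + ω (c, y, z, m) (c', y', z', m')
      - ω (c - b + a, d2 a + y - x, d2 b + z - x, m - d1 x)
          (c' - b' + a', d2 a' + y' - x', d2 b' + z' - x', m' - d1 x') = 0) :
    ∀ (a a' : W2),
      ω (a, 0, 0, 0) (a', 0, 0, 0) = -ω (0, 0, d2 a, 0) (0, d2 a', 0, 0) :=
  stmt_2_general (isMultiplicativeForm_chainFace_iff.mpr hmult)
end

section
/- (Uniqueness part of the classification of constant multiplicative 2-forms.) If ω and ω' are alternating bilinear forms on V₂ that are both normalized and multiplicative, and if their components agree, i.e. C₄₁(m,a) = C₄₁'(m,a) for all m ∈ W₀, a ∈ W₂ and C₃₂(x,x') = C₃₂'(x,x') for all x, x' ∈ W₁, then ω = ω'. -/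
/-!
Write `Cᵢⱼ` for the components of a form with respect to the four factors of `V₂`. Evaluated on
doubly degenerate 3-simplices, multiplicativity expresses the pullbacks along `σ₀` and `σ₁` through
`C₄₄`, so for a multiplicative form normalization amounts to `C₄₄ = 0`. On pairs of coordinate
vectors of `V₃` it gives `C₁₂(a, x) = C₃₂(∂₂a, x)`, `C₁₃(a, x) = -C₁₂(a, x) - C₁₄(a, ∂₁x)` and
`C₁₁(a, a') = C₁₃(a, ∂₂a')`. Hence an alternating multiplicative form is determined by `C₄₁`, `C₃₂`
and `C₄₄`.
-/

/-- The space `V₂` of 2-simplices of the simplicial module attached to a three-term complex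
`W2 → W1 → W0`. -/
abbrev TwoSimplices (W0 W1 W2 : Type*) := W2 × W1 × W1 × W0

/-- The space `V₃` of 3-simplices of the simplicial module attached to a three-term complex
`W2 → W1 → W0`. -/
abbrev ThreeSimplices (W0 W1 W2 : Type*) := W2 × W2 × W2 × W1 × W1 × W1 × W0

section

variable {R W0 W1 W2 N : Type*} [CommRing R]
  [AddCommGroup W0] [Module R W0] [AddCommGroup W1] [Module R W1]
  [AddCommGroup W2] [Module R W2] [AddCommGroup N] [Module R N]

namespace ThreeSimplices

/-- The face map `f₀ : V₃ → V₂`. -/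
def face₀ : ThreeSimplices W0 W1 W2 → TwoSimplices W0 W1 W2
  | (a, _, _, x, y, _, m) => (a, x, y, m)

/-- The face map `f₁ : V₃ → V₂`. -/
def face₁ : ThreeSimplices W0 W1 W2 → TwoSimplices W0 W1 W2
  | (_, b, _, x, _, z, m) => (b, x, z, m)

/-- The face map `f₂ : V₃ → V₂`. -/
def face₂ : ThreeSimplices W0 W1 W2 → TwoSimplices W0 W1 W2
  | (_, _, c, _, y, z, m) => (c, y, z, m)

/-- The face map `f₃ : V₃ → V₂`, the only one that involves the differentials. -/
def face₃ (d2 : W2 →ₗ[R] W1) (d1 : W1 →ₗ[R] W0) :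
    ThreeSimplices W0 W1 W2 → TwoSimplices W0 W1 W2
  | (a, b, c, x, y, z, m) => (c - b + a, d2 a + y - x, d2 b + z - x, m - d1 x)

end ThreeSimplices

/-- A bilinear map on `V₂` is multiplicative if the alternating sum of its pullbacks along the four
face maps `V₃ → V₂` vanishes. -/
def IsMultiplicative (d2 : W2 →ₗ[R] W1) (d1 : W1 →ₗ[R] W0)
    (η : TwoSimplices W0 W1 W2 →ₗ[R] TwoSimplices W0 W1 W2 →ₗ[R] N) : Prop :=
  ∀ u v : ThreeSimplices W0 W1 W2,
    η u.face₀ v.face₀ - η u.face₁ v.face₁ + η u.face₂ v.face₂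
      - η (u.face₃ d2 d1) (v.face₃ d2 d1) = 0

namespace IsMultiplicative

open ThreeSimplices

variable {d2 : W2 →ₗ[R] W1} {d1 : W1 →ₗ[R] W0}
  {η η' : TwoSimplices W0 W1 W2 →ₗ[R] TwoSimplices W0 W1 W2 →ₗ[R] N}

theorem sub (hη : IsMultiplicative d2 d1 η) (hη' : IsMultiplicative d2 d1 η') :
    IsMultiplicative d2 d1 (η - η') := by
  intro u v
  simp only [LinearMap.sub_apply]
  rw [← sub_eq_zero.mpr ((hη u v).trans (hη' u v).symm)]
  abel

theorem apply_degeneracy₀ (hη : IsMultiplicative d2 d1 η) (x x' : W1) (m m' : W0) :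
    η (0, x, x, m) (0, x', x', m') = η (0, 0, 0, m - d1 x) (0, 0, 0, m' - d1 x') := by
  have h := hη (0, 0, 0, x, x, x, m) (0, 0, 0, x', x', x', m')
  simpa [face₀, face₁, face₂, face₃, sub_eq_zero] using h

theorem apply_degeneracy₁ (hη : IsMultiplicative d2 d1 η) (x x' : W1) (m m' : W0) :
    η (0, 0, x, m) (0, 0, x', m') = η (0, 0, 0, m) (0, 0, 0, m') := by
  have h := hη (0, 0, 0, 0, 0, x, m) (0, 0, 0, 0, 0, x', m')
  simpa [face₀, face₁, face₂, face₃, sub_eq_zero, eq_comm (b := η (0, 0, x, m) _)] using h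

theorem component₁₂_eq_component₃₂ (hη : IsMultiplicative d2 d1 η) (a : W2) (x : W1) :
    η (a, 0, 0, 0) (0, x, 0, 0) = η (0, 0, d2 a, 0) (0, x, 0, 0) := by
  have h : η (a, 0, -d2 a, 0) (0, x, 0, 0) = 0 := by
    simpa [face₀, face₁, face₂, face₃, Prod.mk_zero_zero]
      using hη (0, -a, 0, 0, 0, 0, 0) (0, 0, 0, 0, x, 0, 0)
  have hsplit : ((a, 0, -d2 a, 0) : TwoSimplices W0 W1 W2)
      = (a, 0, 0, 0) - (0, 0, d2 a, 0) := by simp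
  rwa [hsplit, map_sub, LinearMap.sub_apply, sub_eq_zero] at h

theorem component₁₃_eq_neg_component₁₂_sub_component₁₄ (hη : IsMultiplicative d2 d1 η)
    (a : W2) (x : W1) :
    η (a, 0, 0, 0) (0, 0, x, 0)
      = -η (a, 0, 0, 0) (0, x, 0, 0) - η (a, 0, 0, 0) (0, 0, 0, d1 x) := by
  have h : η (a, 0, 0, 0) (0, -x, -x, -d1 x) = 0 := by
    simpa [face₀, face₁, face₂, face₃, Prod.mk_zero_zero]
      using hη (0, 0, a, 0, 0, 0, 0) (0, 0, 0, x, 0, 0, 0)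
  have hsplit : ((0, -x, -x, -d1 x) : TwoSimplices W0 W1 W2)
      = -(0, x, 0, 0) - (0, 0, 0, d1 x) - (0, 0, x, 0) := by simp
  rw [hsplit, map_sub, map_sub, map_neg, sub_eq_zero] at h
  exact h.symm

theorem component₁₁_eq_component₁₃ (hη : IsMultiplicative d2 d1 η) (a a' : W2) :
    η (a, 0, 0, 0) (a', 0, 0, 0) = η (a, 0, 0, 0) (0, 0, d2 a', 0) := by
  have h : η (a, 0, 0, 0) (a', 0, -d2 a', 0) = 0 := by
    simpa [face₀, face₁, face₂, face₃, Prod.mk_zero_zero]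
      using hη (0, 0, a, 0, 0, 0, 0) (0, -a', 0, 0, 0, 0, 0)
  have hsplit : ((a', 0, -d2 a', 0) : TwoSimplices W0 W1 W2)
      = (a', 0, 0, 0) - (0, 0, d2 a', 0) := by simp
  rwa [hsplit, map_sub, sub_eq_zero] at h

theorem apply_inr_inr_eq_zero (hη : IsMultiplicative d2 d1 η) (hrefl : η.IsRefl)
    (hC44 : ∀ m m' : W0, η (0, 0, 0, m) (0, 0, 0, m') = 0)
    (hC32 : ∀ x x' : W1, η (0, 0, x, 0) (0, x', 0, 0) = 0) (x y x' y' : W1) (m m' : W0) :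
    η (0, x, y, m) (0, x', y', m') = 0 := by
  have hdeg₀ (x x' : W1) (m m' : W0) : η (0, x, x, m) (0, x', x', m') = 0 := by
    rw [hη.apply_degeneracy₀, hC44]
  have hdeg₁ (x x' : W1) (m m' : W0) : η (0, 0, x, m) (0, 0, x', m') = 0 := by
    rw [hη.apply_degeneracy₁, hC44]
  have hC23 (x x' : W1) : η (0, x, 0, 0) (0, 0, x', 0) = 0 := hrefl _ _ (hC32 x' x)
  have split (x y : W1) (m : W0) :
      ((0, x, y, m) : TwoSimplices W0 W1 W2) = (0, x, 0, 0) + (0, 0, y, m) := by simp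
  have hC24 (x : W1) (m : W0) : η (0, x, 0, 0) (0, 0, 0, m) = 0 := by
    have h := hdeg₀ x 0 0 m
    rwa [split, map_add, LinearMap.add_apply, hdeg₁, add_zero] at h
  have hmixed (x y : W1) (m : W0) : η (0, x, 0, 0) (0, 0, y, m) = 0 := by
    have hsum : ((0, 0, y, m) : TwoSimplices W0 W1 W2) = (0, 0, y, 0) + (0, 0, 0, m) := by simp
    rw [hsum, map_add, hC23, hC24, add_zero]
  have hC22 (x x' : W1) : η (0, x, 0, 0) (0, x', 0, 0) = 0 := by
    have h := hdeg₀ x x' 0 0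
    rwa [split x, split x', map_add, map_add, LinearMap.add_apply, LinearMap.add_apply, hmixed,
      hdeg₁, hC32, add_zero, add_zero, add_zero] at h
  rw [split x, split x', map_add, map_add, LinearMap.add_apply, LinearMap.add_apply, hC22,
    hmixed, hdeg₁, hrefl _ _ (hmixed x' y m)]
  simp only [add_zero]

theorem apply_inl_eq_zero (hη : IsMultiplicative d2 d1 η)
    (hC32 : ∀ x x' : W1, η (0, 0, x, 0) (0, x', 0, 0) = 0) (a : W2)
    (hC14 : ∀ m : W0, η (a, 0, 0, 0) (0, 0, 0, m) = 0) :
    η (a, 0, 0, 0) = 0 := by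
  have hC12 (x : W1) : η (a, 0, 0, 0) (0, x, 0, 0) = 0 := by
    rw [hη.component₁₂_eq_component₃₂, hC32]
  have hC13 (x : W1) : η (a, 0, 0, 0) (0, 0, x, 0) = 0 := by
    rw [hη.component₁₃_eq_neg_component₁₂_sub_component₁₄, hC12, hC14, neg_zero, sub_zero]
  have hC11 (a' : W2) : η (a, 0, 0, 0) (a', 0, 0, 0) = 0 := by
    rw [hη.component₁₁_eq_component₁₃, hC13]
  refine LinearMap.ext fun ⟨a', x, y, m⟩ => ?_
  have hsplit : ((a', x, y, m) : TwoSimplices W0 W1 W2)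
      = (a', 0, 0, 0) + (0, x, 0, 0) + (0, 0, y, 0) + (0, 0, 0, m) := by simp
  rw [hsplit, map_add, map_add, map_add, hC11, hC12, hC13, hC14]
  simp only [add_zero, LinearMap.zero_apply]

theorem eq_zero_of_components (hη : IsMultiplicative d2 d1 η) (hrefl : η.IsRefl)
    (hC44 : ∀ m m' : W0, η (0, 0, 0, m) (0, 0, 0, m') = 0)
    (hC41 : ∀ (m : W0) (a : W2), η (0, 0, 0, m) (a, 0, 0, 0) = 0)
    (hC32 : ∀ x x' : W1, η (0, 0, x, 0) (0, x', 0, 0) = 0) : η = 0 := by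
  have hfst (a : W2) : η (a, 0, 0, 0) = 0 :=
    hη.apply_inl_eq_zero hC32 a fun m => hrefl _ _ (hC41 m a)
  have split : ∀ u : TwoSimplices W0 W1 W2, u = (u.1, 0, 0, 0) + (0, u.2) := by simp
  refine LinearMap.ext₂ fun u v => ?_
  have hu : η (u.1, 0, 0, 0) v = 0 := by rw [hfst, LinearMap.zero_apply]
  have hv : η (0, u.2) (v.1, 0, 0, 0) = 0 := hrefl _ _ (by rw [hfst, LinearMap.zero_apply])
  have huv : η (0, u.2) (0, v.2) = 0 :=
    hη.apply_inr_inr_eq_zero hrefl hC44 hC32 _ _ _ _ _ _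
  rw [split u, map_add, LinearMap.add_apply, hu, split v, map_add, hv, huv]
  simp only [add_zero, LinearMap.zero_apply]

end IsMultiplicative

theorem stmt_5_general (d2 : W2 →ₗ[R] W1) (d1 : W1 →ₗ[R] W0)
    (ω ω' : TwoSimplices W0 W1 W2 →ₗ[R] TwoSimplices W0 W1 W2 →ₗ[R] N)
    (halt : ω.IsAlt) (halt' : ω'.IsAlt)
    (hmult : IsMultiplicative d2 d1 ω) (hmult' : IsMultiplicative d2 d1 ω')
    (hC44 : ∀ m m' : W0, ω (0, 0, 0, m) (0, 0, 0, m') = ω' (0, 0, 0, m) (0, 0, 0, m'))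
    (hC41 : ∀ (m : W0) (a : W2), ω (0, 0, 0, m) (a, 0, 0, 0) = ω' (0, 0, 0, m) (a, 0, 0, 0))
    (hC32 : ∀ x x' : W1, ω (0, 0, x, 0) (0, x', 0, 0) = ω' (0, 0, x, 0) (0, x', 0, 0)) :
    ω = ω' := by
  have halt_sub : (ω - ω').IsAlt := fun v => by
    rw [LinearMap.sub_apply, LinearMap.sub_apply, halt v, halt' v, sub_zero]
  exact sub_eq_zero.mp <| (hmult.sub hmult').eq_zero_of_components halt_sub.isRefl
    (fun m m' => sub_eq_zero.mpr (hC44 m m')) (fun m a => sub_eq_zero.mpr (hC41 m a))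
    (fun x x' => sub_eq_zero.mpr (hC32 x x'))

end

/-- uniqueness part of the classification of constant multiplicative
2-forms: two alternating, normalized, multiplicative bilinear forms on
`V₂ = W₂ × W₁ × W₁ × W₀` with the same components `C₄₁` and `C₃₂` are equal. -/
theorem stmt_5
    (W0 W1 W2 : Type*)
    [AddCommGroup W0] [Module ℝ W0]
    [AddCommGroup W1] [Module ℝ W1]
    [AddCommGroup W2] [Module ℝ W2]
    (d2 : W2 →ₗ[ℝ] W1) (d1 : W1 →ₗ[ℝ] W0)
    (hd : ∀ a : W2, d1 (d2 a) = 0)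
    (ω ω' : (W2 × W1 × W1 × W0) →ₗ[ℝ] (W2 × W1 × W1 × W0) →ₗ[ℝ] ℝ)
    (halt : ∀ v, ω v v = 0)
    (halt' : ∀ v, ω' v v = 0)
    (hnorm : ∀ (x x' : W1) (m m' : W0),
        ω (0, x, x, m) (0, x', x', m') = 0 ∧ ω (0, 0, x, m) (0, 0, x', m') = 0)
    (hnorm' : ∀ (x x' : W1) (m m' : W0),
        ω' (0, x, x, m) (0, x', x', m') = 0 ∧ ω' (0, 0, x, m) (0, 0, x', m') = 0)
    (hmult : ∀ (a b c : W2) (x y z : W1) (m : W0)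
        (a' b' c' : W2) (x' y' z' : W1) (m' : W0),
      ω (a, x, y, m) (a', x', y', m')
      - ω (b, x, z, m) (b', x', z', m')
      + ω (c, y, z, m) (c', y', z', m')
      - ω (c - b + a, d2 a + y - x, d2 b + z - x, m - d1 x)
          (c' - b' + a', d2 a' + y' - x', d2 b' + z' - x', m' - d1 x') = 0)
    (hmult' : ∀ (a b c : W2) (x y z : W1) (m : W0)
        (a' b' c' : W2) (x' y' z' : W1) (m' : W0),
      ω' (a, x, y, m) (a', x', y', m')
      - ω' (b, x, z, m) (b', x', z', m')
      + ω' (c, y, z, m) (c', y', z', m')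
      - ω' (c - b + a, d2 a + y - x, d2 b + z - x, m - d1 x)
          (c' - b' + a', d2 a' + y' - x', d2 b' + z' - x', m' - d1 x') = 0)
    (hC41 : ∀ (m : W0) (a : W2),
        ω (0, 0, 0, m) (a, 0, 0, 0) = ω' (0, 0, 0, m) (a, 0, 0, 0))
    (hC32 : ∀ x x' : W1,
        ω (0, 0, x, 0) (0, x', 0, 0) = ω' (0, 0, x, 0) (0, x', 0, 0)) :
    ω = ω' :=
  stmt_5_general d2 d1 ω ω' halt halt' (fun _ _ => hmult _ _ _ _ _ _ _ _ _ _ _ _ _ _)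
    (fun _ _ => hmult' _ _ _ _ _ _ _ _ _ _ _ _ _ _)
    (fun m m' => (hnorm 0 0 m m').2.trans (hnorm' 0 0 m m').2.symm) hC41 hC32
end

section
/- Let ω be an alternating, normalized bilinear form on V₂. Then: (i) for all m ∈ W₀ and all (a,x,y,m') ∈ V₂, ω((0,0,0,m),(a,x,y,m')) = C₄₁(m,a); (ii) for all (x,n), (x',n') ∈ V₁, ω(σ₁(x,n), σ₀(x',n')) + ω(σ₁(x',n'), σ₀(x,n)) = C₃₂(x,x') + C₃₂(x',x). Consequently, ω is simplicially nondegenerate — i.e. (a) ω((0,0,0,m),w) = 0 for all w ∈ V₂ implies m = 0, (b) ω((0,0,0,m),w) = 0 for all m ∈ W₀ implies the W₂-component of w is 0, and (c) ω(σ₁θ,σ₀η) + ω(σ₁η,σ₀θ) = 0 for all η ∈ V₁ implies the W₁-component of θ is 0 — if and only if the pairing C₄₁ is nondegenerate and the symmetric bilinear form (x,x') ↦ C₃₂(x,x') + C₃₂(x',x) on W₁ is nondegenerate. -/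
/-!
Every `w = (a, x, y, m)` in `V₂` splits as `(a, 0, 0, 0) + σ₀(x, m) + σ₁(y - x, 0)`. The vector
`(0, 0, 0, m)` is both `σ₀(0, m)` and `σ₁(0, m)`, so a normalized form pairs it to zero with the
last two summands: only `C₄₁` survives. Likewise `σ₀(x, n) = (0, x, 0, 0) + σ₁(x, n)` leaves only
`C₃₂` in `ω(σ₁θ, σ₀η)`. The nondegeneracy conditions thus factor through the projections to `W₂`
and `W₁`, which are surjective.
-/

open Function

/-- The space `V₁` of one-simplices. -/
abbrev OneSimplex (W0 W1 : Type*) := W1 × W0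

/-- The space `V₂` of two-simplices, with coordinates written `(a, x, y, m)`. -/
abbrev TwoSimplex (W0 W1 W2 : Type*) := W2 × W1 × W1 × W0

section Degeneracy

variable {W0 W1 W2 : Type*}

/-- The degeneracy map `σ₀ : V₁ → V₂`. -/
def degeneracy₀ [Zero W2] (v : OneSimplex W0 W1) : TwoSimplex W0 W1 W2 :=
  (0, v.1, v.1, v.2)

/-- The degeneracy map `σ₁ : V₁ → V₂`. -/
def degeneracy₁ [Zero W1] [Zero W2] (v : OneSimplex W0 W1) : TwoSimplex W0 W1 W2 :=
  (0, 0, v.1, v.2)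

variable [AddCommGroup W0] [AddCommGroup W1] [AddCommGroup W2]

theorem twoSimplex_eq_add_degeneracies (w : TwoSimplex W0 W1 W2) :
    w = (w.1, 0, 0, 0) + degeneracy₀ (w.2.1, w.2.2.2) + degeneracy₁ (w.2.2.1 - w.2.1, 0) := by
  simp [degeneracy₀, degeneracy₁]

theorem degeneracy₀_eq_add_degeneracy₁ (v : OneSimplex W0 W1) :
    (degeneracy₀ v : TwoSimplex W0 W1 W2) = (0, v.1, 0, 0) + degeneracy₁ v := by
  simp [degeneracy₀, degeneracy₁]

theorem degeneracy₁_eq_add_bottom (v : OneSimplex W0 W1) :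
    (degeneracy₁ v : TwoSimplex W0 W1 W2) = (0, 0, v.1, 0) + (0, 0, 0, v.2) := by
  simp [degeneracy₁]

end Degeneracy

section Surjective

variable {R M₁ M₂ N ι κ : Type*} [CommSemiring R] [AddCommMonoid M₁] [AddCommMonoid M₂]
  [AddCommMonoid N] [Module R M₁] [Module R M₂] [Module R N]

theorem separatingLeft_iff_of_surjective (B : M₁ →ₗ[R] M₂ →ₗ[R] N) {f : ι → M₁} {g : κ → M₂}
    (hf : Surjective f) (hg : Surjective g) :
    B.SeparatingLeft ↔ ∀ i, (∀ k, B (f i) (g k) = 0) → f i = 0 := by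
  simp only [LinearMap.SeparatingLeft, hf.forall, hg.forall]

theorem separatingRight_iff_of_surjective (B : M₁ →ₗ[R] M₂ →ₗ[R] N) {f : ι → M₁} {g : κ → M₂}
    (hf : Surjective f) (hg : Surjective g) :
    B.SeparatingRight ↔ ∀ k, (∀ i, B (f i) (g k) = 0) → g k = 0 := by
  simp only [LinearMap.SeparatingRight, hf.forall, hg.forall]

end Surjective

section TwoForm

variable {R W0 W1 W2 N : Type*} [CommSemiring R]
  [AddCommGroup W0] [AddCommGroup W1] [AddCommGroup W2] [AddCommMonoid N]
  [Module R W0] [Module R W1] [Module R W2] [Module R N]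
  (ω : LinearMap.BilinMap R (TwoSimplex W0 W1 W2) N)

/-- The component `C₄₁` of a bilinear map on `V₂`, pairing the last coordinate with the first. -/
def component₄₁ : W0 →ₗ[R] W2 →ₗ[R] N :=
  ω.compl₁₂ (LinearMap.inr R W2 _ ∘ₗ LinearMap.inr R W1 _ ∘ₗ LinearMap.inr R W1 W0)
    (LinearMap.inl R W2 _)

/-- The component `C₃₂` of a bilinear map on `V₂`, pairing the third coordinate with the second. -/
def component₃₂ : LinearMap.BilinMap R W1 N :=
  ω.compl₁₂ (LinearMap.inr R W2 _ ∘ₗ LinearMap.inr R W1 _ ∘ₗ LinearMap.inl R W1 W0)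
    (LinearMap.inr R W2 _ ∘ₗ LinearMap.inl R W1 _)

theorem component₄₁_apply (m : W0) (a : W2) :
    component₄₁ ω m a = ω (0, 0, 0, m) (a, 0, 0, 0) :=
  rfl

theorem component₃₂_apply (x x' : W1) :
    component₃₂ ω x x' = ω (0, 0, x, 0) (0, x', 0, 0) :=
  rfl

/-- A bilinear map on `V₂` is normalized if its pullbacks along both degeneracies vanish. -/
def IsNormalizedForm : Prop :=
  ∀ v v' : OneSimplex W0 W1,
    ω (degeneracy₀ v) (degeneracy₀ v') = 0 ∧ ω (degeneracy₁ v) (degeneracy₁ v') = 0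

/-- Simplicial nondegeneracy of a bilinear map on `V₂`: its restriction to vectors `(0, 0, 0, m)` on
the left has zero left radical and right radical inside the kernel of `V₂ → W₂`, and the
symmetrization of `ω(σ₁θ, σ₀η)` has radical inside the kernel of `V₁ → W₁`. -/
def IsSimpliciallyNondegenerate : Prop :=
  (∀ m : W0, (∀ w : TwoSimplex W0 W1 W2, ω (0, 0, 0, m) w = 0) → m = 0) ∧
  (∀ w : TwoSimplex W0 W1 W2, (∀ m : W0, ω (0, 0, 0, m) w = 0) → w.1 = 0) ∧
  (∀ θ : OneSimplex W0 W1, (∀ η : OneSimplex W0 W1,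
    ω (degeneracy₁ θ) (degeneracy₀ η) + ω (degeneracy₁ η) (degeneracy₀ θ) = 0) → θ.1 = 0)

namespace IsNormalizedForm

variable {ω}

theorem apply_bottom (h : IsNormalizedForm ω) (m : W0) (w : TwoSimplex W0 W1 W2) :
    ω (0, 0, 0, m) w = component₄₁ ω m w.1 := by
  have bottom_degeneracy₀ (v : OneSimplex W0 W1) : ω (0, 0, 0, m) (degeneracy₀ v) = 0 :=
    (h (0, m) v).1
  have bottom_degeneracy₁ (v : OneSimplex W0 W1) : ω (0, 0, 0, m) (degeneracy₁ v) = 0 :=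
    (h (0, m) v).2
  calc
    ω (0, 0, 0, m) w
      = ω (0, 0, 0, m) ((w.1, 0, 0, 0) + degeneracy₀ (w.2.1, w.2.2.2)
          + degeneracy₁ (w.2.2.1 - w.2.1, 0)) := by rw [← twoSimplex_eq_add_degeneracies]
    _ = component₄₁ ω m w.1 := by
      rw [map_add, map_add, bottom_degeneracy₀, bottom_degeneracy₁, add_zero, add_zero,
        component₄₁_apply]

theorem apply_degeneracy₁_degeneracy₀ (h : IsNormalizedForm ω) (θ η : OneSimplex W0 W1) :
    ω (degeneracy₁ θ) (degeneracy₀ η) = component₃₂ ω θ.1 η.1 := by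
  have bottom_middle : ω (0, 0, 0, θ.2) (0, η.1, 0, 0) = 0 := by
    rw [h.apply_bottom, map_zero]
  calc
    ω (degeneracy₁ θ) (degeneracy₀ η)
      = ω (degeneracy₁ θ) (0, η.1, 0, 0) := by
        rw [degeneracy₀_eq_add_degeneracy₁, map_add, (h θ η).2, add_zero]
    _ = component₃₂ ω θ.1 η.1 := by
        rw [degeneracy₁_eq_add_bottom, map_add, LinearMap.add_apply, bottom_middle, add_zero,
          component₃₂_apply]

theorem symmetrized_degeneracies (h : IsNormalizedForm ω) (θ η : OneSimplex W0 W1) :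
    ω (degeneracy₁ θ) (degeneracy₀ η) + ω (degeneracy₁ η) (degeneracy₀ θ)
      = (component₃₂ ω + (component₃₂ ω).flip) θ.1 η.1 := by
  simp only [h.apply_degeneracy₁_degeneracy₀, LinearMap.add_apply, LinearMap.flip_apply]

theorem isSimpliciallyNondegenerate_iff (h : IsNormalizedForm ω) :
    IsSimpliciallyNondegenerate ω ↔
      (component₄₁ ω).Nondegenerate ∧ (component₃₂ ω + (component₃₂ ω).flip).SeparatingLeft := by
  have fst_two : Surjective (Prod.fst : TwoSimplex W0 W1 W2 → W2) := Prod.fst_surjective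
  have fst_one : Surjective (Prod.fst : OneSimplex W0 W1 → W1) := Prod.fst_surjective
  rw [LinearMap.Nondegenerate, and_assoc,
    separatingLeft_iff_of_surjective _ surjective_id fst_two,
    separatingRight_iff_of_surjective _ surjective_id fst_two,
    separatingLeft_iff_of_surjective _ fst_one fst_one]
  simp only [IsSimpliciallyNondegenerate, h.apply_bottom, h.symmetrized_degeneracies, id]

end IsNormalizedForm

theorem stmt_7_general {ω : LinearMap.BilinMap R (TwoSimplex W0 W1 W2) N} (h : IsNormalizedForm ω) :
    (∀ m w, ω (0, 0, 0, m) w = component₄₁ ω m w.1)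
    ∧ (∀ θ η : OneSimplex W0 W1,
        ω (degeneracy₁ θ) (degeneracy₀ η) + ω (degeneracy₁ η) (degeneracy₀ θ)
          = component₃₂ ω θ.1 η.1 + component₃₂ ω η.1 θ.1)
    ∧ (IsSimpliciallyNondegenerate ω ↔
        (component₄₁ ω).Nondegenerate
        ∧ (component₃₂ ω + (component₃₂ ω).flip).SeparatingLeft) :=
  ⟨h.apply_bottom, h.symmetrized_degeneracies, h.isSimpliciallyNondegenerate_iff⟩

end TwoForm

/-- for an alternating, normalized bilinear form `ω` on
`V₂ = W₂ × W₁ × W₁ × W₀`: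
(i) `ω((0,0,0,m),(a,x,y,m')) = C₄₁(m,a)`;
(ii) `ω(σ₁θ, σ₀η) + ω(σ₁η, σ₀θ) = C₃₂(x,x') + C₃₂(x',x)` for `θ = (x,n)`, `η = (x',n')`;
and consequently `ω` is simplicially nondegenerate iff `C₄₁` is nondegenerate and
the symmetric part of `C₃₂` is nondegenerate. -/
theorem stmt_7
    (W0 W1 W2 : Type*)
    [AddCommGroup W0] [Module ℝ W0]
    [AddCommGroup W1] [Module ℝ W1]
    [AddCommGroup W2] [Module ℝ W2]
    (d2 : W2 →ₗ[ℝ] W1) (d1 : W1 →ₗ[ℝ] W0)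
    (hd : ∀ a : W2, d1 (d2 a) = 0)
    (ω : (W2 × W1 × W1 × W0) →ₗ[ℝ] (W2 × W1 × W1 × W0) →ₗ[ℝ] ℝ)
    (halt : ∀ v, ω v v = 0)
    (hnorm : ∀ (x x' : W1) (m m' : W0),
        ω (0, x, x, m) (0, x', x', m') = 0 ∧ ω (0, 0, x, m) (0, 0, x', m') = 0) :
    -- (i)
    (∀ (m : W0) (a : W2) (x y : W1) (m' : W0),
        ω (0, 0, 0, m) (a, x, y, m') = ω (0, 0, 0, m) (a, 0, 0, 0))
    -- (ii)
    ∧ (∀ (x x' : W1) (n n' : W0),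
        ω (0, 0, x, n) (0, x', x', n') + ω (0, 0, x', n') (0, x, x, n)
          = ω (0, 0, x, 0) (0, x', 0, 0) + ω (0, 0, x', 0) (0, x, 0, 0))
    -- simplicial nondegeneracy ↔ nondegeneracy of C₄₁ and of the symmetric part of C₃₂
    ∧ (((∀ m : W0, (∀ w : W2 × W1 × W1 × W0, ω (0, 0, 0, m) w = 0) → m = 0)
        ∧ (∀ w : W2 × W1 × W1 × W0, (∀ m : W0, ω (0, 0, 0, m) w = 0) → w.1 = 0)
        ∧ (∀ θ : W1 × W0, (∀ η : W1 × W0,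
            ω (0, 0, θ.1, θ.2) (0, η.1, η.1, η.2)
              + ω (0, 0, η.1, η.2) (0, θ.1, θ.1, θ.2) = 0) → θ.1 = 0))
      ↔ ((∀ m : W0, (∀ a : W2, ω (0, 0, 0, m) (a, 0, 0, 0) = 0) → m = 0)
        ∧ (∀ a : W2, (∀ m : W0, ω (0, 0, 0, m) (a, 0, 0, 0) = 0) → a = 0)
        ∧ (∀ x : W1, (∀ x' : W1,
            ω (0, 0, x, 0) (0, x', 0, 0) + ω (0, 0, x', 0) (0, x, 0, 0) = 0) → x = 0))) := by
  obtain ⟨bottom, symmetrized, nondegenerate_iff⟩ :=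
    stmt_7_general (ω := ω) fun v v' => hnorm v.1 v'.1 v.2 v'.2
  exact ⟨fun m a x y m' => bottom m (a, x, y, m'),
    fun x x' n n' => symmetrized (x, n) (x', n'), nondegenerate_iff.trans and_assoc⟩
end
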